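/- Let k ≥ 1 and let S be a doubly resolving set of the line graph L(T_k) of the friendship graph T_k. Then for every index i with 1 ≤ i ≤ k, the set S contains at least two of the three edges ux_i, uy_i, x_iy_i, i.e., |S ∩ {ux_i, uy_i, x_iy_i}| ≥ 2. -/

import Mathlib

open SimpleGraph

variable {V : Type*}

/-- `S` is a doubly resolving set of `G`: every pair of distinct vertices is doubly
resolved by some pair of vertices of `S`. -/
def IsDoublyResolvingSet (G : SimpleGraph V) (S : Set V) : Prop :=
  ∀ u v : V, u ≠ v → ∃ x ∈ S, ∃ y ∈ S,
    (G.dist u x : ℤ) - (G.dist u y : ℤ) ≠ (G.dist v x : ℤ) - (G.dist v y : ℤ)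

/-- `Ψ(G)`: the minimum cardinality of a doubly resolving set of `G`. -/
noncomputable def psi (G : SimpleGraph V) : ℕ :=
  sInf {n | ∃ S : Set V, IsDoublyResolvingSet G S ∧ S.ncard = n}

/-- The degree of a vertex, as the cardinality of its neighbor set. -/
noncomputable def deg (G : SimpleGraph V) (v : V) : ℕ := (G.neighborSet v).ncard

/-- The maximum degree `Δ(G)`. -/
noncomputable def maxDeg (G : SimpleGraph V) : ℕ := sSup (Set.range (deg G))
/-- The vertex set of the friendship graph `T_k`: the center `u` together with the
vertices `x_i = (i, false)` and `y_i = (i, true)` for `1 ≤ i ≤ k`. -/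
abbrev FriendVert (k : ℕ) : Type := Unit ⊕ (Fin k × Bool)

/-- The center vertex `u` of the friendship graph. -/
def fkU (k : ℕ) : FriendVert k := Sum.inl ()

/-- The vertex `x_i` of the friendship graph. -/
def fkX (k : ℕ) (i : Fin k) : FriendVert k := Sum.inr (i, false)

/-- The vertex `y_i` of the friendship graph. -/
def fkY (k : ℕ) (i : Fin k) : FriendVert k := Sum.inr (i, true)

/-- The friendship graph `T_k`, obtained by gluing `k` triangles at the vertex `u`:
its edges are `u x_i`, `u y_i` and `x_i y_i` for `1 ≤ i ≤ k`. -/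
def friendshipGraph (k : ℕ) : SimpleGraph (FriendVert k) := SimpleGraph.fromRel (fun a b =>
  (∃ i : Fin k, a = fkU k ∧ b = fkX k i) ∨
  (∃ i : Fin k, a = fkU k ∧ b = fkY k i) ∨
  (∃ i : Fin k, a = fkX k i ∧ b = fkY k i))

/-!
In the line graph of a graph with a triangle `u x y` whose vertices `x` and `y` have no further
neighbors, the edges `ux` and `uy` are twins, so they have the same distance to every other edge and
one of them lies in `S`. The only neighbors of the edge `xy` are these twins, so every edge outside
the triangle is exactly one step further from `xy` than from `ux`, and `ux` itself is as well. Hence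
if `ux ∈ S`, the pair `xy`, `ux` can only be doubly resolved when `uy` or `xy` is also in `S`.
-/

section

variable {W : Type*} {G : SimpleGraph V} {H : SimpleGraph W} {S : Set V} {a b c u v x y : V}

theorem dist_map_hom_le (f : G →g H) (huv : G.Reachable u v) :
    H.dist (f u) (f v) ≤ G.dist u v := by
  obtain ⟨p, hp⟩ := huv.exists_walk_length_eq_dist
  calc H.dist (f u) (f v) ≤ (p.map f).length := dist_le _
    _ = G.dist u v := by rw [Walk.length_map, hp]

theorem dist_map_iso (φ : G ≃g H) (u v : V) : H.dist (φ u) (φ v) = G.dist u v := by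
  by_cases huv : G.Reachable u v
  · have hle : H.dist (φ u) (φ v) ≤ G.dist u v := dist_map_hom_le φ.toHom huv
    have hge : G.dist (φ.symm (φ u)) (φ.symm (φ v)) ≤ H.dist (φ u) (φ v) :=
      dist_map_hom_le φ.symm.toHom (φ.reachable_iff.2 huv)
    rw [φ.symm_apply_apply, φ.symm_apply_apply] at hge
    exact hle.antisymm hge
  · rw [dist_eq_zero_of_not_reachable huv,
      dist_eq_zero_of_not_reachable (mt φ.reachable_iff.1 huv)]

theorem exists_adj_dist_eq_add_one (huv : G.Reachable u v) (hne : u ≠ v) :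
    ∃ w, G.Adj u w ∧ G.dist u v = G.dist w v + 1 := by
  obtain ⟨p, hp⟩ := huv.exists_walk_length_eq_dist
  cases p with
  | nil => exact absurd rfl hne
  | @cons _ w _ huw q =>
    obtain ⟨r, hr⟩ := q.reachable.exists_walk_length_eq_dist
    have hwv : G.dist w v ≤ q.length := dist_le q
    have huv_le : G.dist u v ≤ (r.cons huw).length := dist_le _
    rw [Walk.length_cons] at hp huv_le
    exact ⟨w, huw, by lia⟩

theorem dist_eq_add_one_of_forall_adj {d : ℕ} (huv : G.Reachable u v) (hne : u ≠ v)
    (hd : ∀ w, G.Adj u w → G.dist w v = d) : G.dist u v = d + 1 := by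
  obtain ⟨w, huw, hw⟩ := exists_adj_dist_eq_add_one huv hne
  rw [hw, hd w huw]

/-- Two vertices are twins if they have the same neighbors apart from each other. They may or may
not be adjacent, so this covers both true and false twins. -/
def AreTwins (G : SimpleGraph V) (a b : V) : Prop :=
  ∀ v, v ≠ a → v ≠ b → (G.Adj a v ↔ G.Adj b v)

namespace AreTwins

theorem symm (h : AreTwins G a b) : AreTwins G b a :=
  fun v hvb hva => (h v hva hvb).symm

/-- The graph automorphism exchanging two twins and fixing all other vertices. -/
def swapIso [DecidableEq V] (h : AreTwins G a b) : G ≃g G where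
  toEquiv := Equiv.swap a b
  map_rel_iff' {v w} := by
    have hv := h v
    have hw := h w
    simp only [Equiv.swap_apply_def]
    split_ifs <;> grind [G.adj_comm, G.irrefl]

theorem dist_eq (h : AreTwins G a b) (hva : v ≠ a) (hvb : v ≠ b) : G.dist a v = G.dist b v := by
  classical
  calc G.dist a v = G.dist (h.swapIso a) (h.swapIso v) := (dist_map_iso h.swapIso a v).symm
    _ = G.dist b v := congrArg₂ G.dist (Equiv.swap_apply_left a b)
      (Equiv.swap_apply_of_ne_of_ne hva hvb)

end AreTwins

namespace IsDoublyResolvingSet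

theorem exists_dist_ne_add (hS : IsDoublyResolvingSet G S) (huv : u ≠ v) (d : ℤ) :
    ∃ s ∈ S, (G.dist u s : ℤ) ≠ G.dist v s + d := by
  obtain ⟨s, hs, t, ht, hne⟩ := hS u v huv
  by_contra! hconst
  have := hconst s hs
  have := hconst t ht
  lia

theorem mem_or_mem_of_areTwins (hS : IsDoublyResolvingSet G S) (hab : AreTwins G a b)
    (hne : a ≠ b) : a ∈ S ∨ b ∈ S := by
  by_contra! hnotMem
  obtain ⟨s, hs, hdist⟩ := hS.exists_dist_ne_add hne 0
  refine hdist ?_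
  rw [hab.dist_eq (ne_of_mem_of_not_mem hs hnotMem.1) (ne_of_mem_of_not_mem hs hnotMem.2), add_zero]

theorem mem_or_mem_of_neighborSet_eq_twins (hS : IsDoublyResolvingSet G S) (hG : G.Preconnected)
    (hab : AreTwins G a b) (hc : G.neighborSet c = {a, b}) (ha : a ∈ S) : b ∈ S ∨ c ∈ S := by
  have hca : G.Adj c a := by simp [← mem_neighborSet, hc]
  by_contra! hnotMem
  obtain ⟨s, hs, hdist⟩ := hS.exists_dist_ne_add hca.ne 1
  refine hdist ?_
  have hsb : s ≠ b := ne_of_mem_of_not_mem hs hnotMem.1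
  have hsc : s ≠ c := ne_of_mem_of_not_mem hs hnotMem.2
  obtain rfl | hsa := eq_or_ne s a
  · simp [dist_eq_one_iff_adj.2 hca]
  · have hneighbor (w : V) (hcw : G.Adj c w) : G.dist w s = G.dist a s := by
      rw [← mem_neighborSet, hc] at hcw
      obtain rfl | rfl := hcw
      · rfl
      · exact (hab.dist_eq hsa hsb).symm
    exact_mod_cast dist_eq_add_one_of_forall_adj (hG c s) hsc.symm hneighbor

theorem two_le_ncard_inter_of_neighborSet_eq_twins (hS : IsDoublyResolvingSet G S)
    (hG : G.Preconnected) (hab : AreTwins G a b) (hne : a ≠ b) (hc : G.neighborSet c = {a, b}) :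
    2 ≤ (S ∩ {a, b, c}).ncard := by
  have hca : G.Adj c a := by simp [← mem_neighborSet, hc]
  have hcb : G.Adj c b := by simp [← mem_neighborSet, hc]
  have hab_mem := hS.mem_or_mem_of_areTwins hab hne
  have ha_imp := hS.mem_or_mem_of_neighborSet_eq_twins hG hab hc
  have hb_imp := hS.mem_or_mem_of_neighborSet_eq_twins hG hab.symm (hc.trans (Set.pair_comm a b))
  have htwo : (a ∈ S ∧ b ∈ S) ∨ (a ∈ S ∧ c ∈ S) ∨ (b ∈ S ∧ c ∈ S) := by tauto
  have hfin : (S ∩ {a, b, c}).Finite := (Set.toFinite {a, b, c}).inter_of_right S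
  refine (Set.one_lt_ncard hfin).2 ?_
  obtain ⟨ha, hb⟩ | ⟨ha, hc⟩ | ⟨hb, hc⟩ := htwo
  · exact ⟨a, ⟨ha, by simp⟩, b, ⟨hb, by simp⟩, hne⟩
  · exact ⟨a, ⟨ha, by simp⟩, c, ⟨hc, by simp⟩, hca.ne'⟩
  · exact ⟨b, ⟨hb, by simp⟩, c, ⟨hc, by simp⟩, hcb.ne'⟩

end IsDoublyResolvingSet

theorem lineGraph_reachable_of_mem_of_mem {e f : G.edgeSet} (he : v ∈ (e : Sym2 V))
    (hf : v ∈ (f : Sym2 V)) : G.lineGraph.Reachable e f := by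
  obtain rfl | hef := eq_or_ne e f
  · rfl
  · exact (lineGraph_adj_iff_exists.2 ⟨hef, v, he, hf⟩).reachable

theorem lineGraph_reachable_of_walk (p : G.Walk u v) {e f : G.edgeSet} (he : u ∈ (e : Sym2 V))
    (hf : v ∈ (f : Sym2 V)) : G.lineGraph.Reachable e f := by
  induction p generalizing e with
  | nil => exact lineGraph_reachable_of_mem_of_mem he hf
  | @cons u w _ huw _ ih =>
    let uw : G.edgeSet := ⟨s(u, w), huw⟩
    exact (lineGraph_reachable_of_mem_of_mem (f := uw) he (Sym2.mem_mk_left u w)).trans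
      (ih (Sym2.mem_mk_right u w) hf)

theorem lineGraph_preconnected (hG : G.Preconnected) : G.lineGraph.Preconnected := fun e f => by
  obtain ⟨p⟩ := hG (e : Sym2 V).out.1 (f : Sym2 V).out.1
  exact lineGraph_reachable_of_walk p (Sym2.out_fst_mem _) (Sym2.out_fst_mem _)

/-- The vertices `u`, `x`, `y` form a pendant triangle of `G`: a triangle attached to the rest of
`G` only at `u`. The edges of the triangle are encoded in the neighborhoods of `x` and `y`. -/
structure IsPendantTriangle (G : SimpleGraph V) (u x y : V) : Prop where
  neighborSet_left : G.neighborSet x = {u, y}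
  neighborSet_right : G.neighborSet y = {u, x}

namespace IsPendantTriangle

theorem symm (h : IsPendantTriangle G u x y) : IsPendantTriangle G u y x :=
  ⟨h.neighborSet_right, h.neighborSet_left⟩

theorem adj_left_iff (h : IsPendantTriangle G u x y) : G.Adj x v ↔ v = u ∨ v = y := by
  rw [← mem_neighborSet, h.neighborSet_left, Set.mem_insert_iff, Set.mem_singleton_iff]

theorem adj_apex_left (h : IsPendantTriangle G u x y) : G.Adj u x :=
  (h.adj_left_iff.2 (.inl rfl)).symm

theorem adj_left_right (h : IsPendantTriangle G u x y) : G.Adj x y :=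
  h.adj_left_iff.2 (.inr rfl)

/-- The edge `ux` of a pendant triangle `u x y`, as a vertex of the line graph. -/
def edgeLeft (h : IsPendantTriangle G u x y) : G.edgeSet := ⟨s(u, x), h.adj_apex_left⟩

/-- The edge `uy` of a pendant triangle `u x y`, as a vertex of the line graph. -/
def edgeRight (h : IsPendantTriangle G u x y) : G.edgeSet := h.symm.edgeLeft

/-- The edge `xy` of a pendant triangle `u x y` opposite to `u`, as a vertex of the line graph. -/
def edgeBase (h : IsPendantTriangle G u x y) : G.edgeSet := ⟨s(x, y), h.adj_left_right⟩

theorem edgeBase_symm (h : IsPendantTriangle G u x y) : h.symm.edgeBase = h.edgeBase :=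
  Subtype.ext Sym2.eq_swap

theorem edgeLeft_ne_edgeRight (h : IsPendantTriangle G u x y) : h.edgeLeft ≠ h.edgeRight :=
  fun heq => h.adj_left_right.ne (Sym2.congr_right.1 (congrArg Subtype.val heq))

theorem edgeLeft_ne_edgeBase (h : IsPendantTriangle G u x y) : h.edgeLeft ≠ h.edgeBase :=
  fun heq => h.symm.adj_apex_left.ne
    (Sym2.congr_right.1 (Sym2.eq_swap.trans (congrArg Subtype.val heq)))

theorem left_mem_iff (h : IsPendantTriangle G u x y) {e : G.edgeSet} :
    x ∈ (e : Sym2 V) ↔ e = h.edgeLeft ∨ e = h.edgeBase := by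
  constructor
  · obtain ⟨e, he⟩ := e
    rintro ⟨w, rfl⟩
    obtain rfl | rfl := h.adj_left_iff.1 he
    · exact .inl (Subtype.ext Sym2.eq_swap)
    · exact .inr rfl
  · rintro (rfl | rfl)
    · exact Sym2.mem_mk_right u x
    · exact Sym2.mem_mk_left x y

theorem right_mem_iff (h : IsPendantTriangle G u x y) {e : G.edgeSet} :
    y ∈ (e : Sym2 V) ↔ e = h.edgeRight ∨ e = h.edgeBase := by
  rw [h.symm.left_mem_iff, h.edgeBase_symm, edgeRight]

theorem lineGraph_adj_edgeLeft_iff (h : IsPendantTriangle G u x y) {e : G.edgeSet}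
    (he : e ≠ h.edgeLeft) :
    G.lineGraph.Adj h.edgeLeft e ↔ u ∈ (e : Sym2 V) ∨ e = h.edgeBase := by
  have hmem (w : V) : w ∈ (h.edgeLeft : Sym2 V) ↔ w = u ∨ w = x := Sym2.mem_iff
  simp only [lineGraph_adj_iff_exists, hmem, or_and_right, exists_or, exists_eq_left,
    h.left_mem_iff, he, he.symm, ne_eq, not_false_eq_true, true_and, false_or]

theorem areTwins_edgeLeft_edgeRight (h : IsPendantTriangle G u x y) :
    AreTwins G.lineGraph h.edgeLeft h.edgeRight := fun e hleft hright => by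
  rw [h.lineGraph_adj_edgeLeft_iff hleft, edgeRight, h.symm.lineGraph_adj_edgeLeft_iff hright,
    h.edgeBase_symm]

theorem lineGraph_neighborSet_edgeBase (h : IsPendantTriangle G u x y) :
    G.lineGraph.neighborSet h.edgeBase = {h.edgeLeft, h.edgeRight} := by
  have hleft := h.edgeLeft_ne_edgeBase
  have hright : h.edgeRight ≠ h.edgeBase := h.edgeBase_symm ▸ h.symm.edgeLeft_ne_edgeBase
  have hmem (w : V) : w ∈ (h.edgeBase : Sym2 V) ↔ w = x ∨ w = y := Sym2.mem_iff
  ext e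
  simp only [mem_neighborSet, lineGraph_adj_iff_exists, hmem, or_and_right, exists_or,
    exists_eq_left, h.left_mem_iff, h.right_mem_iff, Set.mem_insert_iff, Set.mem_singleton_iff]
  grind

end IsPendantTriangle

theorem drs_friendshipGraph_two_per_triangle_general {S : Set G.edgeSet} (hG : G.Preconnected)
    (h : IsPendantTriangle G u x y) (hS : IsDoublyResolvingSet G.lineGraph S) :
    2 ≤ (S ∩ {e : G.edgeSet |
      (e : Sym2 V) = s(u, x) ∨ (e : Sym2 V) = s(u, y) ∨ (e : Sym2 V) = s(x, y)}).ncard := by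
  have htriangle : {e : G.edgeSet |
      (e : Sym2 V) = s(u, x) ∨ (e : Sym2 V) = s(u, y) ∨ (e : Sym2 V) = s(x, y)} =
      {h.edgeLeft, h.edgeRight, h.edgeBase} := by
    ext e
    simp only [IsPendantTriangle.edgeLeft, IsPendantTriangle.edgeRight, IsPendantTriangle.edgeBase,
      Set.mem_ofPred_eq, Set.mem_insert_iff, Set.mem_singleton_iff, Subtype.ext_iff]
  rw [htriangle]
  exact hS.two_le_ncard_inter_of_neighborSet_eq_twins (lineGraph_preconnected hG)
    h.areTwins_edgeLeft_edgeRight h.edgeLeft_ne_edgeRight h.lineGraph_neighborSet_edgeBase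

end

theorem friendshipGraph_adj_center {k : ℕ} {v : FriendVert k} (hv : v ≠ fkU k) :
    (friendshipGraph k).Adj (fkU k) v := by
  obtain ⟨⟩ | ⟨i, _ | _⟩ := v
  · exact absurd rfl hv
  · exact ⟨hv.symm, .inl (.inl ⟨i, rfl, rfl⟩)⟩
  · exact ⟨hv.symm, .inl (.inr (.inl ⟨i, rfl, rfl⟩))⟩

theorem friendshipGraph_preconnected (k : ℕ) : (friendshipGraph k).Preconnected := by
  have hcenter (v : FriendVert k) : (friendshipGraph k).Reachable (fkU k) v := by
    obtain rfl | hv := eq_or_ne v (fkU k)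
    · rfl
    · exact (friendshipGraph_adj_center hv).reachable
  exact fun v w => (hcenter v).symm.trans (hcenter w)

theorem isPendantTriangle_friendshipGraph {k : ℕ} (i : Fin k) :
    IsPendantTriangle (friendshipGraph k) (fkU k) (fkX k i) (fkY k i) where
  neighborSet_left := by
    ext (_ | ⟨j, _ | _⟩) <;> simp [friendshipGraph, fkU, fkX, fkY, eq_comm]
  neighborSet_right := by
    ext (_ | ⟨j, _ | _⟩) <;> simp [friendshipGraph, fkU, fkX, fkY, eq_comm]

/-- Let `k ≥ 1` and let `S` be a doubly resolving set of `L(T_k)`, where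
`T_k` is the friendship graph. Then for each `i`, `S` contains at least two of the three
edges `u x_i`, `u y_i`, `x_i y_i`. -/
theorem drs_friendshipGraph_two_per_triangle (k : ℕ) (hk : 1 ≤ k)
    (S : Set (friendshipGraph k).edgeSet)
    (hS : IsDoublyResolvingSet (friendshipGraph k).lineGraph S) :
    ∀ i : Fin k,
      2 ≤ (S ∩ {e : (friendshipGraph k).edgeSet |
        (e : Sym2 (FriendVert k)) = s(fkU k, fkX k i) ∨
        (e : Sym2 (FriendVert k)) = s(fkU k, fkY k i) ∨
        (e : Sym2 (FriendVert k)) = s(fkX k i, fkY k i)}).ncard := fun i =>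
  drs_friendshipGraph_two_per_triangle_general (friendshipGraph_preconnected k)
    (isPendantTriangle_friendshipGraph i) hS
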